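/- For the win-lose game G = G(Ĝ, φ) constructed from an r-player win-lose game Ĝ with the positive utility property and a 3SAT formula φ with n ≥ 4 variables: every Nash equilibrium σ of G that is not a Nash equilibrium of Ĝ satisfies: (i) there is an assignment γ(σ) for φ, i.e. a choice for each j ∈ {0,…,n−1} of exactly one literal from {ℓ_j, ℓ̄_j}, such that for each special player i ∈ {1,2}, σ_i is the uniform distribution on the n literals of γ(σ), each played with probability 1/n; (ii) U_1(σ) = U_2(σ) = 2/n; and (iii) every player i ∈ {3,…,r} plays δ with probability 1. -/

import Mathlib

open Finset

/-! ## Basic notions for finite strategic games -/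

/-- `x` is a probability distribution on the finite type `α`. -/
def IsDist {α : Type*} [Fintype α] (x : α → ℝ) : Prop :=
  (∀ s, 0 ≤ x s) ∧ ∑ s, x s = 1

/-- Expected utility of player `i` in the mixed profile `σ`. -/
noncomputable def EU {ι : Type*} [Fintype ι] [DecidableEq ι] {S : ι → Type*}
    [∀ i, Fintype (S i)] (U : (i : ι) → (∀ j, S j) → ℝ)
    (σ : ∀ j, S j → ℝ) (i : ι) : ℝ :=
  ∑ s : ∀ j, S j, (∏ j, σ j (s j)) * U i s

/-- `σ` is a (mixed) Nash equilibrium of the game with utilities `U`. -/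
def IsNashEq {ι : Type*} [Fintype ι] [DecidableEq ι] {S : ι → Type*} [∀ i, Fintype (S i)]
    (U : (i : ι) → (∀ j, S j) → ℝ) (σ : ∀ j, S j → ℝ) : Prop :=
  (∀ i, IsDist (σ i)) ∧
    ∀ (i : ι) (τ : S i → ℝ), IsDist τ →
      EU U (Function.update σ i τ) i ≤ EU U σ i

/-! ## The player and strategy sets of the game `G(Ĝ, φ)` -/

/-- The players: the two special players (`Sum.inl`), plus `k` further players. -/
abbrev Player (k : ℕ) : Type := Fin 2 ⊕ Fin k

/-- A literal `ℓ_j` (second component `true`) or `ℓ̄_j` (second component `false`). -/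
abbrev Lit (n : ℕ) : Type := Fin n × Bool

/-- A pair variable `v_{j,k}` with `j ≠ k`. -/
abbrev PairVar (n : ℕ) : Type := {p : Fin n × Fin n // p.1 ≠ p.2}

/-- The non-gadget strategies of a special player: literals, clauses and pair variables. -/
abbrev SpecialAux (n m : ℕ) : Type := Lit n ⊕ (Fin m ⊕ PairVar n)

/-- The strategy set of each player of `G(Ĝ, φ)`: gadget strategies together with the
literals, clauses and pair variables (for the special players), resp. the single extra
strategy `δ` (for the non-special players). -/
def Strat {k : ℕ} (Shat : Player k → Type) (n m : ℕ) : Player k → Type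
  | .inl p => Shat (.inl p) ⊕ SpecialAux n m
  | .inr q => Shat (.inr q) ⊕ PUnit

instance {k n m : ℕ} (Shat : Player k → Type) [∀ i, Fintype (Shat i)]
    (i : Player k) : Fintype (Strat Shat n m i) := by
  cases i with
  | inl p => exact inferInstanceAs (Fintype (Shat (.inl p) ⊕ SpecialAux n m))
  | inr q => exact inferInstanceAs (Fintype (Shat (.inr q) ⊕ PUnit))

/-- The gadget strategy underlying a strategy of `G(Ĝ, φ)`, if any. -/
def toGadget {k n m : ℕ} (Shat : Player k → Type) :
    ∀ i : Player k, Strat Shat n m i → Option (Shat i)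
  | .inl _, .inl a => some a
  | .inl _, .inr _ => none
  | .inr _, .inl a => some a
  | .inr _, .inr _ => none

/-- The strategy chosen by the special player `q` in the profile `s`. -/
def specialOf {k n m : ℕ} (Shat : Player k → Type) (q : Fin 2)
    (s : ∀ j, Strat Shat n m j) : Shat (.inl q) ⊕ SpecialAux n m :=
  s (.inl q)

/-- The other special player. -/
def otherP : Fin 2 → Fin 2 := fun p => if p = 0 then 1 else 0

/-- Whether a strategy of a special player lies in `{ℓ₀, ℓ̄₀, ℓ₁, ℓ̄₁} ∪ 𝒞 ∪ V`
(Case (10) of the utility table). -/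
def allowedB {n m : ℕ} {α : Type*} : α ⊕ SpecialAux n m → Bool
  | .inl _ => false
  | .inr (.inl l) => decide (l.1.val ≤ 1)
  | .inr (.inr _) => true

/-- Utilities ⟨player 1, player 2, each non-special player⟩ in a profile in which the
special players choose the non-gadget strategies `a₁`, `a₂` and every non-special player
chooses `δ` (Cases (1)–(6) and part of Case (11) of the utility table).  The cyclic
difference `I(ℓ′) − I(ℓ)` is computed as `(I(ℓ′) + n − I(ℓ)) % n`. -/
noncomputable def pairU {n m : ℕ} (Cl : Fin m → Finset (Lit n)) :
    SpecialAux n m → SpecialAux n m → ℝ × ℝ × ℝ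
  | .inl l, .inl l' =>
      if l' = (l.1, !l.2) then (0, 0, 1)
      else if (l'.1.val + n - l.1.val) % n ≤ 1 then (1, 0, 1)
      else if (l'.1.val + n - l.1.val) % n ≤ 3 then (0, 1, 1)
      else (0, 0, 1)
  | .inl l, .inr (.inl c) => if (l.1, !l.2) ∈ Cl c then (0, 1, 1) else (0, 0, 0)
  | .inl l, .inr (.inr v) => if l.1 = v.1.1 ∨ l.1 = v.1.2 then (0, 1, 1) else (0, 0, 0)
  | .inr (.inl c), .inl l => if (l.1, !l.2) ∈ Cl c then (1, 0, 1) else (0, 0, 0)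
  | .inr (.inr v), .inl l => if l.1 = v.1.1 ∨ l.1 = v.1.2 then (1, 0, 1) else (0, 0, 0)
  | .inr _, .inr _ => (0, 0, 0)

/-- The utility function of the game `G(Ĝ, φ)`, following Cases (1)–(11) of the
utility table. -/
noncomputable def BigU {k n m : ℕ} (Shat : Player k → Type) [∀ i, Fintype (Shat i)]
    (Uhat : (i : Player k) → (∀ j, Shat j) → ℝ) (Cl : Fin m → Finset (Lit n))
    (i : Player k) (s : ∀ j, Strat Shat n m j) : ℝ :=
  -- Case (7): all players choose gadget strategies
  if h : ∀ j, (toGadget Shat j (s j)).isSome = true then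
    Uhat i (fun j => (toGadget Shat j (s j)).get (h j))
  -- Case (8): at least two, but not all, players choose gadget strategies
  else if 1 < (univ.filter fun j => (toGadget Shat j (s j)).isSome = true).card then
    if (toGadget Shat i (s i)).isSome then 1 else 0
  -- Cases (9), (10), (11): exactly one player chooses a gadget strategy
  else if (univ.filter fun j => (toGadget Shat j (s j)).isSome = true).card = 1 then
    if (toGadget Shat i (s i)).isSome then
      match i with
      | .inl p => if allowedB (specialOf Shat (otherP p) s) then 1 else 0
      | .inr _ => 1
    else 0
  -- Cases (1)–(6), (11): no player chooses a gadget strategy, so every non-special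
  -- player chooses `δ` and the special players choose non-gadget strategies
  else
    match specialOf Shat 0 s, specialOf Shat 1 s with
    | .inr a₁, .inr a₂ =>
        (match i with
         | .inl p => if p = 0 then (pairU Cl a₁ a₂).1 else (pairU Cl a₁ a₂).2.1
         | .inr _ => (pairU Cl a₁ a₂).2.2)
    | _, _ => 0

/-- A mixed profile of the gadget game `Ĝ`, regarded as a mixed profile of `G(Ĝ, φ)`
via the inclusions `Σ̂ᵢ ⊆ Σᵢ`. -/
def liftProfile {k n m : ℕ} (Shat : Player k → Type)
    (σh : ∀ i, Shat i → ℝ) : ∀ i, Strat Shat n m i → ℝ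
  | .inl p => Sum.elim (σh (.inl p)) (fun _ => 0)
  | .inr q => Sum.elim (σh (.inr q)) (fun _ => 0)

/-- The strategy "literal `(j, b)`" of the special player `p`. -/
def litStrat {k n m : ℕ} (Shat : Player k → Type) (p : Fin 2) (j : Fin n) (b : Bool) :
    Strat Shat n m (Sum.inl p) :=
  Sum.inr (Sum.inl (j, b))

/-- The strategy `δ` of the non-special player `q`. -/
def deltaStrat {k n m : ℕ} (Shat : Player k → Type) (q : Fin k) :
    Strat Shat n m (Sum.inr q) :=
  Sum.inr PUnit.unit

/-- The assignment `γ` satisfies the 3SAT formula with clauses `Cl`. -/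
def Satisfies {n m : ℕ} (Cl : Fin m → Finset (Lit n)) (γ : Fin n → Bool) : Prop :=
  ∀ c, ∃ l ∈ Cl c, γ l.1 = l.2

/-!
Suppose that every player gives positive probability to some strategy outside `Ĝ`. Literals earn
only against literals, and pair variables let a special player collect the weight that her opponent
gives to any two indices. Hence a literal of index `j` is a best response only if the indices it
scores against, `j` and `j + 1` for the first player and `j - 3` and `j - 2` for the second, carry
the two largest weights. A round trip through both responses shifts the index by at most three
steps, which for `n ≥ 4` never closes up, so every index is used, and comparing overlapping pairs
of consecutive indices shows that all of them have the same weight `w`. The first player loses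
against the negation of her literal, so at most one literal of each index is in use.

The chosen literals then earn `2w`. This is also what a lone gadget strategy earns from the indices
`0` and `1` alone, so clauses and pair variables have no weight, and gadget strategies are not used
either: if one were, the positive utility property would make some gadget strategy of another
player strictly better than her literals. If, on the other hand, some player uses only
strategies of `Ĝ`, the positive utility property makes everybody do so.
-/

section FiniteGames

variable {ι : Type*} [Fintype ι] [DecidableEq ι] {S : ι → Type*}

theorem IsDist.exists_pos {α : Type*} [Fintype α] {x : α → ℝ} (h : IsDist x) : ∃ a, 0 < x a := by
  by_contra! hx
  linarith [h.2, sum_nonpos fun a (_ : a ∈ univ) => hx a]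

theorem mul_prod_update_apply_update {σ : ∀ j, S j → ℝ} {i : ι} (τ : S i → ℝ) (s : ∀ j, S j)
    (t : S i) :
    σ i (s i) * ∏ j, Function.update σ i τ j (Function.update s i t j) =
      τ t * ∏ j, σ j (s j) := by
  rw [← mul_prod_erase univ _ (mem_univ i), ← mul_prod_erase univ (fun j => σ j (s j)) (mem_univ i)]
  have off_diag : ∏ j ∈ univ.erase i, Function.update σ i τ j (Function.update s i t j) =
      ∏ j ∈ univ.erase i, σ j (s j) :=
    prod_congr rfl fun j hj => by
      rw [Function.update_of_ne (ne_of_mem_erase hj), Function.update_of_ne (ne_of_mem_erase hj)]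
  rw [off_diag, Function.update_self, Function.update_self, mul_left_comm]

variable [∀ i, Fintype (S i)]

/-- The expected utility of player `i` when, in the mixed profile `σ`, she deviates to the pure
strategy `t`. Her own strategy is still drawn from `σ i` and then overwritten by `t`, which is
harmless when `σ i` is a probability distribution. -/
noncomputable def deviationEU (U : (i : ι) → (∀ j, S j) → ℝ) (σ : ∀ j, S j → ℝ) (i : ι)
    (t : S i) : ℝ :=
  ∑ s : ∀ j, S j, (∏ j, σ j (s j)) * U i (Function.update s i t)

theorem EU_update (U : (i : ι) → (∀ j, S j) → ℝ) {σ : ∀ j, S j → ℝ} {i : ι} (h : IsDist (σ i))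
    (τ : S i → ℝ) :
    EU U (Function.update σ i τ) i = ∑ t, τ t * deviationEU U σ i t := by
  calc
    EU U (Function.update σ i τ) i
      = ∑ x : (∀ j, S j) × S i,
          σ i x.2 * ((∏ j, Function.update σ i τ j (x.1 j)) * U i x.1) := by
        simp only [Fintype.sum_prod_type, ← sum_mul, h.2, one_mul, EU]
    -- the involution exchanging the `i`-th entry of the profile with the extra coordinate
    _ = ∑ x : (∀ j, S j) × S i,
          τ x.2 * ((∏ j, σ j (x.1 j)) * U i (Function.update x.1 i x.2)) := by
        refine sum_nbij' (fun x => (Function.update x.1 i x.2, x.1 i))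
          (fun x => (Function.update x.1 i x.2, x.1 i)) (by simp) (by simp) (by simp) (by simp) ?_
        rintro ⟨s, t⟩ -
        have swap := mul_prod_update_apply_update (σ := σ) τ (Function.update s i t) (s i)
        simp only [Function.update_self, Function.update_idem, Function.update_eq_self] at swap ⊢
        rw [← mul_assoc, swap, mul_assoc]
    _ = ∑ t, τ t * deviationEU U σ i t := by
        simp only [Fintype.sum_prod_type_right, mul_sum, deviationEU]

variable {U : (i : ι) → (∀ j, S j) → ℝ} {σ : ∀ j, S j → ℝ}

theorem IsNashEq.deviationEU_le_EU (h : IsNashEq U σ) (i : ι) (t : S i) :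
    deviationEU U σ i t ≤ EU U σ i := by
  classical
  have pure_isDist : IsDist (Pi.single t 1 : S i → ℝ) :=
    ⟨fun s => (Pi.single_nonneg.2 zero_le_one : (0 : S i → ℝ) ≤ Pi.single t 1) s, by simp⟩
  simpa [EU_update U (h.1 i), Pi.single_apply] using h.2 i _ pure_isDist

theorem IsNashEq.deviationEU_eq_EU (h : IsNashEq U σ) {i : ι} {t : S i} (ht : 0 < σ i t) :
    deviationEU U σ i t = EU U σ i := by
  have gain_nonneg : ∀ t ∈ univ, 0 ≤ σ i t * (EU U σ i - deviationEU U σ i t) := fun t _ =>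
    mul_nonneg ((h.1 i).1 t) (sub_nonneg.2 (h.deviationEU_le_EU i t))
  have sum_gain : ∑ t, σ i t * (EU U σ i - deviationEU U σ i t) = 0 := by
    rw [← Function.update_eq_self i σ, EU_update U (h.1 i)]
    simp [mul_sub, ← sum_mul, (h.1 i).2]
  have gain_eq_zero := (sum_eq_zero_iff_of_nonneg gain_nonneg).1 sum_gain t (mem_univ t)
  linarith [(mul_eq_zero.1 gain_eq_zero).resolve_left ht.ne']

theorem IsNashEq.deviationEU_le_deviationEU (h : IsNashEq U σ) {i : ι} {t : S i}
    (ht : 0 < σ i t) (t' : S i) : deviationEU U σ i t' ≤ deviationEU U σ i t :=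
  (h.deviationEU_le_EU i t').trans_eq (h.deviationEU_eq_EU ht).symm

theorem IsNashEq.prod_nonneg (h : IsNashEq U σ) (s : ∀ j, S j) : 0 ≤ ∏ j, σ j (s j) :=
  Finset.prod_nonneg fun j _ => (h.1 j).1 (s j)

end FiniteGames

section TopPairs

variable {α R : Type*} [AddCommMonoid R] [LinearOrder R] [IsOrderedCancelAddMonoid R]

/-- No two distinct points carry more total `y`-weight than `a` and `b` do. This is what the pair
variables enforce: playing `v_{c,d}` earns the weight of the indices `c` and `d`. -/
def IsTopPair (y : α → R) (a b : α) : Prop :=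
  ∀ c d, c ≠ d → y c + y d ≤ y a + y b

variable {y : α → R} {a b c : α}

theorem IsTopPair.le_left (h : IsTopPair y a b) (hc : c ≠ b) : y c ≤ y a :=
  le_of_add_le_add_right (h c b hc)

theorem IsTopPair.le_right (h : IsTopPair y a b) (hc : c ≠ a) : y c ≤ y b :=
  le_of_add_le_add_left (h a c hc.symm)

theorem IsTopPair.pos_or_pos (h : IsTopPair y a b) (hc : 0 < y c) : 0 < y a ∨ 0 < y b := by
  by_cases hcb : c = b
  · exact .inr (hcb ▸ hc)
  · exact .inl (hc.trans_le (h.le_left hcb))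

end TopPairs

section CyclicResponses

variable {G R : Type*} [AddCommGroup G] {e : G}

theorem forall_of_forall_sub {P : G → Prop} {g₀ : G} (fin : IsOfFinAddOrder e)
    (gen : ∀ g, g ∈ AddSubgroup.zmultiples e) (hP : ∀ g, P g → P (g - e)) (h₀ : P g₀) (g : G) :
    P g := by
  obtain ⟨k, hk⟩ := fin.mem_multiples_iff_mem_zmultiples.2 (gen (g₀ - g))
  have iterate : ∀ k : ℕ, P (g₀ - k • e) := fun k => by
    induction k with
    | zero => simpa using h₀
    | succ k ih => simpa only [succ_nsmul, sub_sub] using hP _ ih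
  have := iterate k
  rwa [show k • e = g₀ - g from hk, sub_sub_cancel] at this

variable [AddCommMonoid R] [LinearOrder R]

theorem IsTopPair.apply_sub_eq [IsOrderedCancelAddMonoid R] {y : G → R}
    (h : ∀ j, IsTopPair y j (j + e)) (he : 2 • e ≠ 0) (j : G) : y (j - e) = y j := by
  apply le_antisymm
  · exact (h j).le_left fun eq => he <| by linear_combination (norm := module) -eq
  · have prev := h (j - e - e)
    rw [sub_add_cancel] at prev
    exact prev.le_right fun eq => he <| by linear_combination (norm := module) eq

/-- The index weights `x` and `y` of two players on a cycle with step `e` respond to each other: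
every index used by one player points at a top pair of consecutive indices of the opponent, at
offset `a` resp. `b`. The condition on the offsets makes a round trip through both responses
move by `-e`, `-2e` or `-3e`, and keeps the definition symmetric in the players. -/
structure IsCyclicResponse (e a b : G) (x y : G → R) : Prop where
  add_add_eq_zero : a + b + 3 • e = 0
  exists_pos_left : ∃ j, 0 < x j
  exists_pos_right : ∃ j, 0 < y j
  left : ∀ j, 0 < x j → IsTopPair y (j + a) (j + a + e)
  right : ∀ j, 0 < y j → IsTopPair x (j + b) (j + b + e)

namespace IsCyclicResponse

variable {a b : G} {x y : G → R}

theorem symm (h : IsCyclicResponse e a b x y) : IsCyclicResponse e b a y x :=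
  ⟨add_comm a b ▸ h.add_add_eq_zero, h.exists_pos_right, h.exists_pos_left, h.right, h.left⟩

variable [IsOrderedCancelAddMonoid R]

theorem exists_ne_pos (h : IsCyclicResponse e a b x y) (he : 4 ≤ addOrderOf e) {j : G}
    (hj : 0 < y j) : ∃ c ≠ j, 0 < y c := by
  have nsmul_ne_zero : ∀ k, k ≠ 0 → k < 4 → k • e ≠ 0 := fun k hk hk4 =>
    nsmul_ne_zero_of_lt_addOrderOf hk (hk4.trans_le he)
  have closes := h.add_add_eq_zero
  obtain ⟨_, hx⟩ := h.exists_pos_left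
  rcases (h.right j hj).pos_or_pos hx with hi | hi <;>
    rcases (h.left _ hi).pos_or_pos hj with hc | hc <;> refine ⟨_, fun eq => ?_, hc⟩
  · exact nsmul_ne_zero 3 (by decide) (by decide)
      (by linear_combination (norm := module) closes - eq)
  · exact nsmul_ne_zero 2 (by decide) (by decide)
      (by linear_combination (norm := module) closes - eq)
  · exact nsmul_ne_zero 2 (by decide) (by decide)
      (by linear_combination (norm := module) closes - eq)
  · exact nsmul_ne_zero 1 (by decide) (by decide)
      (by linear_combination (norm := module) closes - eq)

theorem pos_right (h : IsCyclicResponse e a b x y) (he : 4 ≤ addOrderOf e) {j : G}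
    (hj : 0 < x j) : 0 < y (j + a + e) := by
  obtain ⟨g, hg⟩ := h.exists_pos_right
  rcases (h.left j hj).pos_or_pos hg with hleft | hright
  · obtain ⟨c, hc, hc'⟩ := h.exists_ne_pos he hleft
    exact hc'.trans_le ((h.left j hj).le_right hc)
  · exact hright

theorem pos (h : IsCyclicResponse e a b x y) (he : 4 ≤ addOrderOf e)
    (gen : ∀ g, g ∈ AddSubgroup.zmultiples e) (j : G) : 0 < x j := by
  obtain ⟨j₀, hj₀⟩ := h.exists_pos_left
  refine forall_of_forall_sub (P := fun j => 0 < x j) (addOrderOf_pos_iff.1 (by omega)) gen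
    (fun g hg => ?_) hj₀ j
  have round_trip : g + a + e + b + e = g - e := by
    linear_combination (norm := module) h.add_add_eq_zero
  exact round_trip ▸ h.symm.pos_right he (h.pos_right he hg)

theorem eq (h : IsCyclicResponse e a b x y) (he : 4 ≤ addOrderOf e)
    (gen : ∀ g, g ∈ AddSubgroup.zmultiples e) (i j : G) : x i = x j := by
  have top : ∀ j, IsTopPair x j (j + e) := fun j => by
    simpa using h.right (j - b) (h.symm.pos he gen _)
  refine forall_of_forall_sub (P := fun i => x i = x j) (addOrderOf_pos_iff.1 (by omega)) gen
    (fun g hg => ?_) rfl i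
  rw [IsTopPair.apply_sub_eq top (nsmul_ne_zero_of_lt_addOrderOf two_ne_zero (by omega)), hg]

end IsCyclicResponse

end CyclicResponses

section CyclicIndices

variable {n : ℕ}

open scoped Fin.CommRing in
theorem fin_val_nsmul_one [NeZero n] (k : ℕ) : (k • (1 : Fin n) : Fin n).val = k % n := by
  simp

theorem fin_mem_zmultiples_one [NeZero n] (g : Fin n) :
    g ∈ AddSubgroup.zmultiples (1 : Fin n) := by
  have : g = g.val • (1 : Fin n) :=
    Fin.ext (by rw [fin_val_nsmul_one, Nat.mod_eq_of_lt g.isLt])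
  exact this ▸ AddSubgroup.nsmul_mem_zmultiples _ _

theorem fin_addOrderOf_one [NeZero n] : addOrderOf (1 : Fin n) = n := by
  simp [addOrderOf_eq_card_of_forall_mem_zmultiples fin_mem_zmultiples_one]

theorem fin_eq_add_nsmul_one_iff [NeZero n] {k : ℕ} (hk : k < n) {i j : Fin n} :
    j = i + k • 1 ↔ (j.val + n - i.val) % n = k := by
  have cyclic_diff : (j.val + n - i.val) % n = (j - i).val := by
    rw [Fin.val_sub, add_comm, Nat.sub_add_comm i.isLt.le]
  rw [cyclic_diff, ← sub_eq_iff_eq_add', Fin.ext_iff, fin_val_nsmul_one, Nat.mod_eq_of_lt hk]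

end CyclicIndices

section AuxiliaryStrategies

variable {n m : ℕ}

/-- The total weight of the two literals of index `j`. -/
def indexMass (Y : SpecialAux n m → ℝ) (j : Fin n) : ℝ :=
  Y (.inl (j, true)) + Y (.inl (j, false))

theorem indexMass_eq_add_not (Y : SpecialAux n m → ℝ) (j : Fin n) (b : Bool) :
    indexMass Y j = Y (.inl (j, b)) + Y (.inl (j, !b)) := by
  cases b
  · exact add_comm _ _
  · rfl

theorem exists_lit_pos_of_indexMass_pos {Y : SpecialAux n m → ℝ} {j : Fin n}
    (hj : 0 < indexMass Y j) : ∃ b, 0 < Y (.inl (j, b)) := by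
  by_contra! hb
  exact hj.not_ge (add_nonpos (hb true) (hb false))

theorem sum_lit_eq_sum_indexMass (Y : SpecialAux n m → ℝ) :
    ∑ l, Y (.inl l) = ∑ j, indexMass Y j := by
  simp [Fintype.sum_prod_type, indexMass]

theorem sum_lit_mul_ite_fst_eq (Y : SpecialAux n m → ℝ) (j : Fin n) :
    ∑ l : Lit n, Y (.inl l) * (if l.1 = j then 1 else 0) = indexMass Y j := by
  simp [Fintype.sum_prod_type, indexMass, sum_add_distrib]

/-- The utility of the special player `p` when she plays `c`, the other special player plays `b`,
and everybody else plays `δ`. -/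
noncomputable def auxU (Cl : Fin m → Finset (Lit n)) (p : Fin 2) (c b : SpecialAux n m) : ℝ :=
  if p = 0 then (pairU Cl c b).1 else (pairU Cl b c).2.1

/-- The utility of a special player who is alone in playing a gadget strategy, against the strategy
`b` of the other special player; cases (10) and (11) of the utility table. -/
noncomputable def soleGadgetU (b : SpecialAux n m) : ℝ :=
  if allowedB (α := Empty) (.inr b) then 1 else 0

/-- The payoff of the special player `p` for playing `c` against the weights `Y` of the other
special player's literals, clauses and pair variables. -/
noncomputable def auxPayoff (Cl : Fin m → Finset (Lit n)) (p : Fin 2) (Y : SpecialAux n m → ℝ)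
    (c : SpecialAux n m) : ℝ :=
  ∑ b, Y b * auxU Cl p c b

/-- The payoff of a special player who is alone in playing a gadget strategy, against the weights
`Y` of the other special player. -/
noncomputable def soleGadgetPayoff (Y : SpecialAux n m → ℝ) : ℝ :=
  ∑ b, Y b * soleGadgetU b

variable {Cl : Fin m → Finset (Lit n)} {p : Fin 2} {Y : SpecialAux n m → ℝ}

theorem auxU_inr (c : SpecialAux n m) (b : Fin m ⊕ PairVar n) : auxU Cl p c (.inr b) = 0 := by
  rcases c with l | c | v <;> rcases b with c' | v' <;> fin_cases p <;> simp [auxU, pairU] <;>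
    split_ifs <;> rfl

theorem auxU_pairVar_lit (v : PairVar n) (l : Lit n) :
    auxU Cl p (.inr (.inr v)) (.inl l) =
      (if l.1 = v.1.1 then 1 else 0) + (if l.1 = v.1.2 then 1 else 0) := by
  have := v.2
  fin_cases p <;> simp only [auxU, pairU] <;> grind

theorem auxU_zero_lit_lit [NeZero n] (hn : 4 ≤ n) (l l' : Lit n) :
    auxU Cl 0 (.inl l) (.inl l') =
      (if l' = l then 1 else 0) + (if l'.1 = l.1 + 1 then 1 else 0) := by
  have at_zero := fin_eq_add_nsmul_one_iff (i := l.1) (j := l'.1) (show 0 < n by omega)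
  have at_one := fin_eq_add_nsmul_one_iff (i := l.1) (j := l'.1) (show 1 < n by omega)
  simp only [zero_nsmul, add_zero, one_nsmul] at at_zero at_one
  obtain ⟨j, b⟩ := l
  obtain ⟨j', b'⟩ := l'
  simp only [auxU, pairU, Prod.mk.injEq]
  cases b <;> cases b' <;> grind

theorem auxU_one_lit_lit [NeZero n] (hn : 4 ≤ n) (l l' : Lit n) :
    auxU Cl 1 (.inl l) (.inl l') =
      (if l'.1 = l.1 - 2 • 1 then 1 else 0) + (if l'.1 = l.1 - 3 • 1 then 1 else 0) := by
  have at_zero := fin_eq_add_nsmul_one_iff (i := l'.1) (j := l.1) (show 0 < n by omega)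
  have at_two := fin_eq_add_nsmul_one_iff (i := l'.1) (j := l.1) (show 2 < n by omega)
  have at_three := fin_eq_add_nsmul_one_iff (i := l'.1) (j := l.1) (show 3 < n by omega)
  rw [← sub_eq_iff_eq_add, eq_comm] at at_two at_three
  simp only [zero_nsmul, add_zero] at at_zero
  simp only [auxU, pairU, at_two, at_three]
  grind

theorem auxPayoff_eq_sum_lit (c : SpecialAux n m) :
    auxPayoff Cl p Y c = ∑ l : Lit n, Y (.inl l) * auxU Cl p c (.inl l) := by
  simp [auxPayoff, auxU_inr]

theorem auxPayoff_congr {Y' : SpecialAux n m → ℝ} (h : ∀ l, Y (.inl l) = Y' (.inl l))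
    (c : SpecialAux n m) : auxPayoff Cl p Y c = auxPayoff Cl p Y' c := by
  simp only [auxPayoff_eq_sum_lit, h]

theorem auxPayoff_pairVar (v : PairVar n) :
    auxPayoff Cl p Y (.inr (.inr v)) = indexMass Y v.1.1 + indexMass Y v.1.2 := by
  simp only [auxPayoff_eq_sum_lit, auxU_pairVar_lit, mul_add, sum_add_distrib,
    sum_lit_mul_ite_fst_eq]

theorem auxPayoff_zero_lit [NeZero n] (hn : 4 ≤ n) (l : Lit n) :
    auxPayoff Cl 0 Y (.inl l) = Y (.inl l) + indexMass Y (l.1 + 1) := by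
  simp only [auxPayoff_eq_sum_lit, auxU_zero_lit_lit hn, mul_add, sum_add_distrib,
    sum_lit_mul_ite_fst_eq]
  simp

theorem auxPayoff_one_lit [NeZero n] (hn : 4 ≤ n) (l : Lit n) :
    auxPayoff Cl 1 Y (.inl l) = indexMass Y (l.1 - 2 • 1) + indexMass Y (l.1 - 3 • 1) := by
  simp only [auxPayoff_eq_sum_lit, auxU_one_lit_lit hn, mul_add, sum_add_distrib,
    sum_lit_mul_ite_fst_eq]

theorem soleGadgetPayoff_eq [NeZero n] (hn : 2 ≤ n) :
    soleGadgetPayoff Y = indexMass Y 0 + indexMass Y 1 + ∑ c, Y (.inr c) := by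
  have soleGadgetU_lit : ∀ l : Lit n, soleGadgetU (m := m) (.inl l) =
      (if l.1 = 0 then 1 else 0) + (if l.1 = 1 then 1 else 0) := fun l => by
    have val_one : (1 : Fin n).val = 1 := by simp [Nat.mod_eq_of_lt hn]
    simp only [soleGadgetU, allowedB, Fin.ext_iff, Fin.val_zero, val_one]
    grind
  rw [soleGadgetPayoff, Fintype.sum_sum_type]
  simp only [soleGadgetU_lit, mul_add, sum_add_distrib, sum_lit_mul_ite_fst_eq]
  simp [soleGadgetU, allowedB]

end AuxiliaryStrategies

section AuxiliaryEquilibria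

variable {n m : ℕ} {Cl : Fin m → Finset (Lit n)} {p : Fin 2}

/-- The weights that give the literals chosen by the assignment `γ` weight `w` each, and every
other literal, clause or pair variable weight `0`. -/
def assignmentWeights (γ : Fin n → Bool) (w : ℝ) : SpecialAux n m → ℝ
  | .inl l => if γ l.1 = l.2 then w else 0
  | .inr _ => 0

theorem assignmentWeights_chosen (γ : Fin n → Bool) (w : ℝ) (j : Fin n) :
    assignmentWeights (m := m) γ w (.inl (j, γ j)) = w :=
  if_pos rfl

theorem assignmentWeights_eq_zero {γ : Fin n → Bool} {c : SpecialAux n m}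
    (hc : ∀ j, c ≠ .inl (j, γ j)) (w : ℝ) : assignmentWeights γ w c = 0 := by
  rcases c with ⟨j, b⟩ | c
  · exact if_neg fun hb : γ j = b => hc j (hb ▸ rfl)
  · rfl

theorem indexMass_assignmentWeights (γ : Fin n → Bool) (w : ℝ) (j : Fin n) :
    indexMass (m := m) (assignmentWeights γ w) j = w := by
  cases h : γ j <;> simp [indexMass, assignmentWeights, h]

theorem sum_assignmentWeights (γ : Fin n → Bool) (w : ℝ) :
    ∑ c, assignmentWeights (m := m) γ w c = n * w := by
  rw [Fintype.sum_sum_type, sum_lit_eq_sum_indexMass]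
  simp [indexMass_assignmentWeights, assignmentWeights]

theorem auxPayoff_assignmentWeights (hn : 4 ≤ n) (p : Fin 2) (γ : Fin n → Bool) (w : ℝ)
    (j : Fin n) : auxPayoff Cl p (assignmentWeights γ w) (.inl (j, γ j)) = 2 * w := by
  have : NeZero n := ⟨by omega⟩
  fin_cases p
  · simp only [Fin.zero_eta, auxPayoff_zero_lit hn, indexMass_assignmentWeights]
    simp [assignmentWeights, two_mul]
  · simp only [Fin.mk_one, auxPayoff_one_lit hn, indexMass_assignmentWeights, two_mul]

theorem soleGadgetPayoff_assignmentWeights (hn : 2 ≤ n) (γ : Fin n → Bool) (w : ℝ) :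
    soleGadgetPayoff (m := m) (assignmentWeights γ w) = 2 * w := by
  have : NeZero n := ⟨by omega⟩
  simp [soleGadgetPayoff_eq hn, indexMass_assignmentWeights, assignmentWeights, two_mul]

/-- The conditions that a Nash equilibrium of `G(Ĝ, φ)` imposes on the weights `X p` which the
special players `p` give to literals, clauses and pair variables: whatever is played does at least
as well as every other such strategy and as being alone in playing a gadget strategy. The weights
need not sum to `1`. -/
structure IsAuxEquilibrium (Cl : Fin m → Finset (Lit n)) (X : Fin 2 → SpecialAux n m → ℝ) :
    Prop where
  nonneg : ∀ p c, 0 ≤ X p c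
  exists_pos : ∀ p, ∃ c, 0 < X p c
  auxPayoff_le : ∀ p c, 0 < X p c → ∀ c',
    auxPayoff Cl p (X (otherP p)) c' ≤ auxPayoff Cl p (X (otherP p)) c
  soleGadgetPayoff_le : ∀ p c, 0 < X p c →
    soleGadgetPayoff (X (otherP p)) ≤ auxPayoff Cl p (X (otherP p)) c

theorem otherP_ne (p : Fin 2) : otherP p ≠ p := by
  revert p
  decide

theorem otherP_otherP (p : Fin 2) : otherP (otherP p) = p := by
  revert p
  decide

namespace IsAuxEquilibrium

variable {X : Fin 2 → SpecialAux n m → ℝ}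

theorem exists_lit_pos (h : IsAuxEquilibrium Cl X) (hn : 2 ≤ n) (p : Fin 2) :
    ∃ l, 0 < X p (.inl l) := by
  have : NeZero n := ⟨by omega⟩
  by_contra! lit_nonpos
  have lit_zero : ∀ l, X p (.inl l) = 0 := fun l => (lit_nonpos l).antisymm (h.nonneg p _)
  have sum_pos : 0 < ∑ b, X p (.inr b) := by
    obtain ⟨l | b, hb⟩ := h.exists_pos p
    · exact absurd hb (lit_nonpos l).not_gt
    · exact sum_pos' (fun b _ => h.nonneg p _) ⟨b, mem_univ b, hb⟩
  obtain ⟨c, hc⟩ := h.exists_pos (otherP p)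
  have sole_le := h.soleGadgetPayoff_le _ c hc
  rw [otherP_otherP, soleGadgetPayoff_eq hn, auxPayoff_eq_sum_lit] at sole_le
  simp only [indexMass, lit_zero, zero_mul, sum_const_zero, add_zero, zero_add] at sole_le
  exact sole_le.not_gt sum_pos

theorem lit_le_indexMass (h : IsAuxEquilibrium Cl X) (p : Fin 2) (l : Lit n) :
    X p (.inl l) ≤ indexMass (X p) l.1 := by
  rw [indexMass_eq_add_not _ _ l.2]
  exact le_add_of_nonneg_right (h.nonneg _ _)

theorem isTopPair (h : IsAuxEquilibrium Cl X) {c : SpecialAux n m} (hc : 0 < X p c) {i j : Fin n}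
    (le : auxPayoff Cl p (X (otherP p)) c ≤
      indexMass (X (otherP p)) i + indexMass (X (otherP p)) j) :
    IsTopPair (indexMass (X (otherP p))) i j := fun i' j' hne =>
  calc
    indexMass (X (otherP p)) i' + indexMass (X (otherP p)) j'
      = auxPayoff Cl p (X (otherP p)) (.inr (.inr ⟨(i', j'), hne⟩)) :=
        (auxPayoff_pairVar ⟨(i', j'), hne⟩).symm
    _ ≤ auxPayoff Cl p (X (otherP p)) c := h.auxPayoff_le p c hc _
    _ ≤ _ := le

theorem isCyclicResponse [NeZero n] (h : IsAuxEquilibrium Cl X) (hn : 4 ≤ n) :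
    IsCyclicResponse 1 0 (-(3 • 1)) (indexMass (X 0)) (indexMass (X 1)) where
  add_add_eq_zero := by abel
  exists_pos_left :=
    let ⟨l, hl⟩ := h.exists_lit_pos (by omega) 0
    ⟨l.1, hl.trans_le (h.lit_le_indexMass 0 l)⟩
  exists_pos_right :=
    let ⟨l, hl⟩ := h.exists_lit_pos (by omega) 1
    ⟨l.1, hl.trans_le (h.lit_le_indexMass 1 l)⟩
  left j hj := by
    obtain ⟨b, hb⟩ := exists_lit_pos_of_indexMass_pos hj
    rw [add_zero]
    refine h.isTopPair (p := 0) hb ((auxPayoff_zero_lit hn (j, b)).trans_le ?_)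
    gcongr
    exact h.lit_le_indexMass 1 (j, b)
  right j hj := by
    obtain ⟨b, hb⟩ := exists_lit_pos_of_indexMass_pos hj
    rw [show j + -(3 • 1) = j - 3 • 1 by abel, show j - 3 • 1 + 1 = j - 2 • 1 by abel]
    exact h.isTopPair (p := 1) hb ((auxPayoff_one_lit hn (j, b)).trans (add_comm _ _)).le

theorem indexMass_pos [NeZero n] (h : IsAuxEquilibrium Cl X) (hn : 4 ≤ n) (p : Fin 2)
    (j : Fin n) : 0 < indexMass (X p) j := by
  have he : 4 ≤ addOrderOf (1 : Fin n) := hn.trans_eq fin_addOrderOf_one.symm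
  fin_cases p
  · exact (h.isCyclicResponse hn).pos he fin_mem_zmultiples_one j
  · exact (h.isCyclicResponse hn).symm.pos he fin_mem_zmultiples_one j

theorem indexMass_eq [NeZero n] (h : IsAuxEquilibrium Cl X) (hn : 4 ≤ n) (p : Fin 2)
    (i j : Fin n) : indexMass (X p) i = indexMass (X p) j := by
  have he : 4 ≤ addOrderOf (1 : Fin n) := hn.trans_eq fin_addOrderOf_one.symm
  fin_cases p
  · exact (h.isCyclicResponse hn).eq he fin_mem_zmultiples_one i j
  · exact (h.isCyclicResponse hn).symm.eq he fin_mem_zmultiples_one i j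

-- A literal pays player 0 strictly less than a pair variable if player 1 also uses its negation.
theorem lit_not_eq_zero (h : IsAuxEquilibrium Cl X) (hn : 4 ≤ n) {j : Fin n} {b : Bool}
    (hb : 0 < X 0 (.inl (j, b))) : X 1 (.inl (j, !b)) = 0 := by
  have : NeZero n := ⟨by omega⟩
  have one_ne : (1 : Fin n) ≠ 0 := fun eq => by
    have := fin_addOrderOf_one (n := n)
    rw [eq, addOrderOf_zero] at this
    omega
  have le := h.auxPayoff_le 0 _ hb (.inr (.inr ⟨(j, j + 1), by simpa using one_ne.symm⟩))
  rw [auxPayoff_pairVar, auxPayoff_zero_lit hn, indexMass_eq_add_not _ j b] at le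
  exact le_antisymm (by simpa [otherP] using le) (h.nonneg 1 _)

theorem exists_lit_eq_assignmentWeights [NeZero n] (h : IsAuxEquilibrium Cl X) (hn : 4 ≤ n) :
    ∃ γ : Fin n → Bool, ∀ p l,
      X p (.inl l) = assignmentWeights (m := m) γ (indexMass (X p) 0) (.inl l) := by
  choose γ hγ using fun j => exists_lit_pos_of_indexMass_pos (h.indexMass_pos hn 0 j)
  have unchosen_one : ∀ j, X 1 (.inl (j, !γ j)) = 0 := fun j => h.lit_not_eq_zero hn (hγ j)
  have unchosen_zero : ∀ j, X 0 (.inl (j, !γ j)) = 0 := fun j => by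
    by_contra ne
    have chosen_one := h.lit_not_eq_zero hn ((h.nonneg 0 _).lt_of_ne' ne)
    rw [Bool.not_not] at chosen_one
    have mass := h.indexMass_pos hn 1 j
    rw [indexMass_eq_add_not _ j (γ j), chosen_one, unchosen_one, add_zero] at mass
    exact mass.false
  have unchosen : ∀ p j, X p (.inl (j, !γ j)) = 0 :=
    Fin.forall_fin_two.2 ⟨unchosen_zero, unchosen_one⟩
  refine ⟨γ, fun p ⟨j, b⟩ => ?_⟩
  by_cases hb : γ j = b
  · subst hb
    simp [assignmentWeights, ← h.indexMass_eq hn p j 0, indexMass_eq_add_not _ j (γ j), unchosen]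
  · rw [← (Bool.not_eq.2 hb : (!γ j) = b)]
    simp [assignmentWeights, unchosen]

theorem exists_eq_assignmentWeights (h : IsAuxEquilibrium Cl X) (hn : 4 ≤ n) :
    ∃ (γ : Fin n → Bool) (w : Fin 2 → ℝ), ∀ p, 0 < w p ∧ X p = assignmentWeights γ (w p) := by
  have : NeZero n := ⟨by omega⟩
  obtain ⟨γ, hγ⟩ := h.exists_lit_eq_assignmentWeights hn
  refine ⟨γ, fun p => indexMass (X p) 0, fun p => ⟨h.indexMass_pos hn p 0, ?_⟩⟩
  have chosen_pos : 0 < X (otherP p) (.inl (0, γ 0)) := by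
    simpa [hγ, assignmentWeights] using h.indexMass_pos hn (otherP p) 0
  -- a chosen literal earns `2w`, so the lone use of a gadget strategy earns at most that
  have sole_le := h.soleGadgetPayoff_le _ _ chosen_pos
  rw [otherP_otherP, auxPayoff_congr (hγ p), auxPayoff_assignmentWeights hn,
    soleGadgetPayoff_eq (by omega), h.indexMass_eq hn p 1 0] at sole_le
  have sum_inr : ∑ c, X p (.inr c) = 0 :=
    le_antisymm (by linarith) (sum_nonneg fun c _ => h.nonneg p _)
  funext c
  rcases c with l | c
  · exact hγ p l
  · exact (sum_eq_zero_iff_of_nonneg fun c _ => h.nonneg p _).1 sum_inr c (mem_univ c)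

end IsAuxEquilibrium

end AuxiliaryEquilibria

section Strategies

variable {k n m : ℕ} {Shat : Player k → Type}

/-- The inclusion of the strategies of `Ĝ` into those of `G(Ĝ, φ)`. -/
def gadgetStrat (Shat : Player k → Type) : ∀ i : Player k, Shat i → Strat Shat n m i
  | .inl _, a => Sum.inl a
  | .inr _, a => Sum.inl a

/-- The literal, clause or pair variable `c` as a strategy of the special player `p`. -/
def auxStrat (Shat : Player k → Type) (p : Fin 2) (c : SpecialAux n m) :
    Strat Shat n m (.inl p) :=
  Sum.inr c

/-- `x` is one of the strategies of `Ĝ`. -/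
abbrev IsGadget {i : Player k} (x : Strat Shat n m i) : Prop :=
  (toGadget Shat i x).isSome = true

theorem toGadget_gadgetStrat (i : Player k) (a : Shat i) :
    toGadget Shat i (gadgetStrat (n := n) (m := m) Shat i a) = some a := by
  cases i <;> rfl

theorem gadgetStrat_injective (i : Player k) :
    Function.Injective (gadgetStrat (n := n) (m := m) Shat i) := fun a b h =>
  Option.some.inj (by rw [← toGadget_gadgetStrat, h, toGadget_gadgetStrat])

theorem isGadget_gadgetStrat (i : Player k) (a : Shat i) :
    IsGadget (gadgetStrat (n := n) (m := m) Shat i a) := by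
  rw [IsGadget, toGadget_gadgetStrat, Option.isSome_some]

theorem IsGadget.exists_eq {i : Player k} {x : Strat Shat n m i} (h : IsGadget x) :
    ∃ a, x = gadgetStrat Shat i a := by
  rcases i with p | q <;> rcases x with a | c
  · exact ⟨a, rfl⟩
  · cases h
  · exact ⟨a, rfl⟩
  · cases h

theorem not_isGadget_auxStrat (p : Fin 2) (c : SpecialAux n m) : ¬ IsGadget (auxStrat Shat p c) :=
  nofun

theorem exists_eq_auxStrat {p : Fin 2} {x : Strat Shat n m (.inl p)} (h : ¬ IsGadget x) :
    ∃ c, x = auxStrat Shat p c := by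
  rcases x with a | c
  · exact absurd rfl h
  · exact ⟨c, rfl⟩

theorem eq_deltaStrat {q : Fin k} {x : Strat Shat n m (.inr q)} (h : ¬ IsGadget x) :
    x = deltaStrat Shat q := by
  rcases x with a | _
  · exact absurd rfl h
  · rfl

theorem sum_special [∀ i, Fintype (Shat i)] (p : Fin 2) (f : Strat Shat n m (.inl p) → ℝ) :
    ∑ x, f x = ∑ a, f (gadgetStrat Shat _ a) + ∑ c, f (auxStrat Shat p c) :=
  Fintype.sum_sum_type (α₁ := Shat (.inl p)) (α₂ := SpecialAux n m) f

theorem sum_nonspecial [∀ i, Fintype (Shat i)] (q : Fin k) (f : Strat Shat n m (.inr q) → ℝ) :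
    ∑ x, f x = ∑ a, f (gadgetStrat Shat _ a) + f (deltaStrat Shat q) :=
  (Fintype.sum_sum_type (α₁ := Shat (.inr q)) (α₂ := PUnit) f).trans <|
    congrArg _ (Fintype.sum_unique fun u : PUnit => f (Sum.inr u))

end Strategies

section Utility

variable {k n m : ℕ} {Shat : Player k → Type} [∀ i, Fintype (Shat i)]
  {Uhat : (i : Player k) → (∀ j, Shat j) → ℝ} {Cl : Fin m → Finset (Lit n)}
  {s : ∀ j, Strat Shat n m j}

theorem BigU_gadgetStrat (i : Player k) (r : ∀ j, Shat j) :
    BigU (n := n) Shat Uhat Cl i (fun j => gadgetStrat Shat j (r j)) = Uhat i r := by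
  have all_gadget : ∀ j, (toGadget Shat j (gadgetStrat (n := n) (m := m) Shat j (r j))).isSome :=
    fun j => isGadget_gadgetStrat j (r j)
  unfold BigU
  rw [dif_pos all_gadget]
  simp only [toGadget_gadgetStrat, Option.get_some]

theorem BigU_eq_zero {i j : Player k} (hi : ¬ IsGadget (s i)) (hj : IsGadget (s j)) :
    BigU Shat Uhat Cl i s = 0 := by
  have card_ne_zero : (univ.filter fun j => (toGadget Shat j (s j)).isSome = true).card ≠ 0 :=
    card_ne_zero.2 ⟨j, mem_filter.2 ⟨mem_univ j, hj⟩⟩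
  unfold BigU
  rw [dif_neg fun h => hi (h i), if_neg hi, if_neg hi]
  split_ifs <;> first | rfl | omega

theorem BigU_eq_one {i j l : Player k} (hi : IsGadget (s i)) (hj : IsGadget (s j)) (hij : i ≠ j)
    (hl : ¬ IsGadget (s l)) : BigU Shat Uhat Cl i s = 1 := by
  have one_lt_card : 1 < (univ.filter fun j => (toGadget Shat j (s j)).isSome = true).card :=
    one_lt_card.2 ⟨i, mem_filter.2 ⟨mem_univ i, hi⟩, j, mem_filter.2 ⟨mem_univ j, hj⟩, hij⟩
  unfold BigU
  rw [dif_neg fun h => hl (h l), if_pos one_lt_card, if_pos hi]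

theorem BigU_sole_gadget {p : Fin 2} (hp : IsGadget (s (.inl p)))
    (others : ∀ j ≠ .inl p, ¬ IsGadget (s j)) {b : SpecialAux n m}
    (hb : s (.inl (otherP p)) = auxStrat Shat _ b) :
    BigU Shat Uhat Cl (.inl p) s = soleGadgetU b := by
  have gadget_players :
      (univ.filter fun j => (toGadget Shat j (s j)).isSome = true) = {.inl p} := by
    ext j
    simp only [mem_filter, mem_univ, true_and, mem_singleton]
    exact ⟨not_imp_not.1 (others j), fun h => h ▸ hp⟩
  have specialOf_other : specialOf Shat (otherP p) s = .inr b := hb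
  unfold BigU
  rw [dif_neg fun h => others (.inl (otherP p)) (by simp [otherP_ne]) (h _), gadget_players,
    card_singleton, if_neg (lt_irrefl 1), if_pos rfl, if_pos hp]
  simp only [specialOf_other]
  rcases b with l | b <;> rfl

theorem BigU_no_gadget (hs : ∀ j, ¬ IsGadget (s j)) {p : Fin 2} {c b : SpecialAux n m}
    (hc : s (.inl p) = auxStrat Shat _ c) (hb : s (.inl (otherP p)) = auxStrat Shat _ b) :
    BigU Shat Uhat Cl (.inl p) s = auxU Cl p c b := by
  have gadget_players : (univ.filter fun j => (toGadget Shat j (s j)).isSome = true) = ∅ :=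
    filter_eq_empty_iff.2 fun j _ => hs j
  have specialOf_self : specialOf Shat p s = .inr c := hc
  have specialOf_other : specialOf Shat (otherP p) s = .inr b := hb
  unfold BigU
  rw [dif_neg fun h => hs _ (h (.inl p)), gadget_players, card_empty,
    if_neg (by decide), if_neg (by decide)]
  obtain rfl | rfl : p = 0 ∨ p = 1 := by omega
  · rw [show otherP 0 = 1 from rfl] at specialOf_other
    simp [specialOf_self, specialOf_other, auxU]
  · rw [show otherP 1 = 0 from rfl] at specialOf_other
    simp [specialOf_self, specialOf_other, auxU]

theorem pairU_nonneg (a b : SpecialAux n m) : 0 ≤ pairU Cl a b := by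
  rcases a with a | a | a <;> rcases b with b | b | b <;> simp only [pairU] <;>
    (try split_ifs) <;> simp [Prod.le_def]

theorem BigU_nonneg (hU : ∀ i r, 0 ≤ Uhat i r) (i : Player k) (s : ∀ j, Strat Shat n m j) :
    0 ≤ BigU Shat Uhat Cl i s := by
  unfold BigU
  split_ifs
  · exact hU _ _
  · exact zero_le_one
  · exact le_rfl
  · cases i with
    | inl p => dsimp only; split_ifs <;> norm_num
    | inr q => exact zero_le_one
  · exact le_rfl
  · split
    · next a b _ _ =>
      have nonneg := pairU_nonneg (Cl := Cl) a b
      cases i with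
      | inl p => dsimp only; split_ifs; exacts [nonneg.1, nonneg.2.1]
      | inr q => exact nonneg.2.2
    · exact le_rfl

theorem exists_BigU_update_pos [∀ i, Nonempty (Shat i)]
    (hPUP : ∀ (i : Player k) (r : ∀ j, Shat j), ∃ t, 0 < Uhat i (Function.update r i t))
    {i j : Player k} (hij : i ≠ j) (hj : IsGadget (s j)) :
    ∃ t, 0 < BigU Shat Uhat Cl i (Function.update s i (gadgetStrat Shat i t)) := by
  by_cases others : ∀ l, l ≠ i → IsGadget (s l)
  · have : ∀ l, ∃ a, l ≠ i → s l = gadgetStrat Shat l a := fun l => by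
      by_cases hl : l = i
      · exact ⟨Classical.arbitrary _, fun hl' => absurd hl hl'⟩
      · exact (others l hl).exists_eq.imp fun a ha _ => ha
    choose r hr using this
    obtain ⟨t, ht⟩ := hPUP i r
    have update_eq : Function.update s i (gadgetStrat Shat i t) =
        fun l => gadgetStrat Shat l (Function.update r i t l) := by
      funext l
      by_cases hl : l = i
      · subst hl
        simp only [Function.update_self]
      · simp only [Function.update_of_ne hl, hr l hl]
    exact ⟨t, by rwa [update_eq, BigU_gadgetStrat]⟩
  · push Not at others
    obtain ⟨l, hl, hl'⟩ := others
    refine ⟨Classical.arbitrary _, ?_⟩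
    rw [BigU_eq_one (i := i) (j := j) (l := l) _ _ hij]
    · exact one_pos
    · rwa [Function.update_of_ne hl]
    · rw [Function.update_self]
      exact isGadget_gadgetStrat _ _
    · rwa [Function.update_of_ne hij.symm]

end Utility

section Deviations

variable {k n m : ℕ} {Shat : Player k → Type}

/-- Weights on the strategies of the players whose product over a profile is `f b` if the other
special player plays `b` and nobody except possibly `p` plays a gadget strategy, and `0` if somebody
else does. As a product it has an expectation that factors over the players. -/
def noGadgetWeight (p : Fin 2) (f : SpecialAux n m → ℝ) : ∀ j : Player k, Strat Shat n m j → ℝ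
  | .inl q, x => if q = p then 1 else Sum.elim (fun _ => 0) f x
  | .inr _, x => Sum.elim (fun _ => 0) (fun _ => 1) x

/-- The weights that the special players give to literals, clauses and pair variables. -/
def auxPart (σ : ∀ i, Strat Shat n m i → ℝ) (p : Fin 2) (c : SpecialAux n m) : ℝ :=
  σ (.inl p) (auxStrat Shat p c)

/-- The probability that all non-special players play `δ`. -/
noncomputable def deltaProb (σ : ∀ i, Strat Shat n m i → ℝ) : ℝ :=
  ∏ q, σ (.inr q) (deltaStrat Shat q)

variable {p : Fin 2} {f : SpecialAux n m → ℝ} {s : ∀ j, Strat Shat n m j}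

theorem noGadgetWeight_gadgetStrat {j : Player k} (hj : j ≠ .inl p) (a : Shat j) :
    noGadgetWeight p f j (gadgetStrat Shat j a) = 0 := by
  rcases j with q | q
  · exact if_neg fun hq => hj (congrArg Sum.inl hq)
  · rfl

theorem noGadgetWeight_auxStrat (p : Fin 2) (f : SpecialAux n m → ℝ) (b : SpecialAux n m) :
    noGadgetWeight p f _ (auxStrat Shat (otherP p) b) = f b :=
  if_neg (otherP_ne p)

theorem prod_noGadgetWeight_eq_zero {j : Player k} (hj : j ≠ .inl p) (hs : IsGadget (s j)) :
    ∏ l, noGadgetWeight p f l (s l) = 0 := by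
  obtain ⟨a, ha⟩ := hs.exists_eq
  exact prod_eq_zero (mem_univ j) (by rw [ha, noGadgetWeight_gadgetStrat hj])

theorem prod_player {M : Type*} [CommMonoid M] (p : Fin 2) (g : Player k → M) :
    ∏ j, g j = g (.inl p) * g (.inl (otherP p)) * ∏ q, g (.inr q) := by
  rw [Fintype.prod_sum_type, Fin.prod_univ_two]
  fin_cases p
  · rfl
  · rw [mul_comm (g (.inl 0))]
    rfl

theorem prod_noGadgetWeight (others : ∀ j ≠ .inl p, ¬ IsGadget (s j)) {b : SpecialAux n m}
    (hb : s (.inl (otherP p)) = auxStrat Shat _ b) :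
    ∏ l, noGadgetWeight p f l (s l) = f b := by
  have delta : ∀ q : Fin k, noGadgetWeight p f _ (s (.inr q)) = 1 := fun q => by
    rw [eq_deltaStrat (others (.inr q) Sum.inr_ne_inl)]
    rfl
  have own : noGadgetWeight p f _ (s (.inl p)) = 1 := if_pos rfl
  rw [prod_player p, hb, own, noGadgetWeight_auxStrat, prod_congr rfl fun q _ => delta q,
    prod_const_one, one_mul, mul_one]

variable [∀ i, Fintype (Shat i)] {σ : ∀ i, Strat Shat n m i → ℝ}
  {Uhat : (i : Player k) → (∀ j, Shat j) → ℝ} {Cl : Fin m → Finset (Lit n)}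

theorem expect_prod_noGadgetWeight (h : IsDist (σ (.inl p))) (f : SpecialAux n m → ℝ) :
    ∑ s : ∀ j, Strat Shat n m j, (∏ j, σ j (s j)) * ∏ j, noGadgetWeight p f j (s j) =
      (∑ b, auxPart σ (otherP p) b * f b) * deltaProb σ := by
  have own : ∑ x, σ (.inl p) x * noGadgetWeight p f _ x = 1 := by
    simpa [noGadgetWeight] using h.2
  have other : ∑ x, σ (.inl (otherP p)) x * noGadgetWeight p f _ x =
      ∑ b, auxPart σ (otherP p) b * f b := by
    simp only [sum_special, noGadgetWeight_gadgetStrat (Sum.inl_injective.ne (otherP_ne p)),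
      noGadgetWeight_auxStrat, mul_zero, sum_const_zero, zero_add, auxPart]
  have nonspecial : ∀ q : Fin k, ∑ x, σ (.inr q) x * noGadgetWeight p f _ x =
      σ (.inr q) (deltaStrat Shat q) := fun q => by
    simp only [sum_nonspecial, noGadgetWeight_gadgetStrat Sum.inr_ne_inl, mul_zero,
      sum_const_zero, zero_add]
    exact mul_one _
  simp only [← prod_mul_distrib]
  rw [← Fintype.prod_sum fun j x => σ j x * noGadgetWeight p f j x, prod_player p, own, one_mul,
    other, prod_congr rfl fun q _ => nonspecial q, deltaProb]

theorem sum_auxPart_eq_one (h : IsDist (σ (.inl p))) (hσ : ∀ x, IsGadget x → σ (.inl p) x = 0) :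
    ∑ c, auxPart σ p c = 1 := by
  simpa only [auxPart, sum_special, hσ _ (isGadget_gadgetStrat _ _), sum_const_zero,
    zero_add] using h.2

theorem deltaStrat_eq_one {q : Fin k} (h : IsDist (σ (.inr q)))
    (hσ : ∀ x, IsGadget x → σ (.inr q) x = 0) : σ (.inr q) (deltaStrat Shat q) = 1 := by
  simpa only [sum_nonspecial, hσ _ (isGadget_gadgetStrat _ _), sum_const_zero, zero_add] using h.2

theorem BigU_update_auxStrat (p : Fin 2) (c : SpecialAux n m) (s : ∀ j, Strat Shat n m j) :
    BigU Shat Uhat Cl (.inl p) (Function.update s (.inl p) (auxStrat Shat p c)) =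
      ∏ j, noGadgetWeight p (auxU Cl p c) j (s j) := by
  by_cases others : ∀ j ≠ .inl p, ¬ IsGadget (s j)
  · have other_ne : (.inl (otherP p) : Player k) ≠ .inl p := Sum.inl_injective.ne (otherP_ne p)
    obtain ⟨b, hb⟩ := exists_eq_auxStrat (others _ other_ne)
    rw [prod_noGadgetWeight others hb]
    refine BigU_no_gadget ?_ (Function.update_self ..)
      ((Function.update_of_ne other_ne ..).trans hb)
    exact (Function.forall_update_iff s fun _ x => ¬ IsGadget x).2
      ⟨not_isGadget_auxStrat p c, others⟩
  · push Not at others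
    obtain ⟨j, hj, hs⟩ := others
    rw [prod_noGadgetWeight_eq_zero hj hs, BigU_eq_zero (j := j)]
    · rw [Function.update_self]
      exact not_isGadget_auxStrat p c
    · rwa [Function.update_of_ne hj]

theorem prod_noGadgetWeight_le_BigU_update_gadgetStrat (hU : ∀ i r, 0 ≤ Uhat i r) (p : Fin 2)
    (t : Shat (.inl p)) (s : ∀ j, Strat Shat n m j) :
    ∏ j, noGadgetWeight p soleGadgetU j (s j) ≤
      BigU Shat Uhat Cl (.inl p) (Function.update s (.inl p) (gadgetStrat Shat _ t)) := by
  by_cases others : ∀ j ≠ .inl p, ¬ IsGadget (s j)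
  · have other_ne : (.inl (otherP p) : Player k) ≠ .inl p := Sum.inl_injective.ne (otherP_ne p)
    obtain ⟨b, hb⟩ := exists_eq_auxStrat (others _ other_ne)
    rw [prod_noGadgetWeight others hb]
    refine (BigU_sole_gadget ?_ (fun j hj => ?_)
      ((Function.update_of_ne other_ne ..).trans hb)).ge
    · rw [Function.update_self]
      exact isGadget_gadgetStrat _ t
    · rw [Function.update_of_ne hj]
      exact others j hj
  · push Not at others
    obtain ⟨j, hj, hs⟩ := others
    rw [prod_noGadgetWeight_eq_zero hj hs]
    exact BigU_nonneg hU _ _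

theorem deviationEU_auxStrat (h : IsDist (σ (.inl p))) (c : SpecialAux n m) :
    deviationEU (BigU Shat Uhat Cl) σ (.inl p) (auxStrat Shat p c) =
      auxPayoff Cl p (auxPart σ (otherP p)) c * deltaProb σ := by
  simp only [deviationEU, BigU_update_auxStrat, expect_prod_noGadgetWeight h, auxPayoff]

end Deviations

namespace IsNashEq

variable {k n m : ℕ} {Shat : Player k → Type} [∀ i, Fintype (Shat i)]
  {Uhat : (i : Player k) → (∀ j, Shat j) → ℝ} {Cl : Fin m → Finset (Lit n)}
  {σ : ∀ i, Strat Shat n m i → ℝ}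

theorem soleGadgetPayoff_mul_le (h : IsNashEq (BigU Shat Uhat Cl) σ) (hU : ∀ i r, 0 ≤ Uhat i r)
    (p : Fin 2) (t : Shat (.inl p)) :
    soleGadgetPayoff (auxPart σ (otherP p)) * deltaProb σ ≤
      deviationEU (BigU Shat Uhat Cl) σ (.inl p) (gadgetStrat Shat _ t) := by
  rw [soleGadgetPayoff, ← expect_prod_noGadgetWeight (h.1 _)]
  exact sum_le_sum fun s _ => mul_le_mul_of_nonneg_left
    (prod_noGadgetWeight_le_BigU_update_gadgetStrat hU p t s) (h.prod_nonneg s)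

theorem EU_special_eq (h : IsNashEq (BigU Shat Uhat Cl) σ) (hn : 4 ≤ n) {γ : Fin n → Bool}
    {w : Fin 2 → ℝ} (hw : ∀ p, 0 < w p ∧ auxPart σ p = assignmentWeights γ (w p)) (p : Fin 2) :
    EU (BigU Shat Uhat Cl) σ (.inl p) = 2 * w (otherP p) * deltaProb σ := by
  let j : Fin n := ⟨0, by omega⟩
  have chosen_pos : 0 < auxPart σ p (.inl (j, γ j)) := by
    rw [(hw p).2, assignmentWeights_chosen]
    exact (hw p).1
  rw [← h.deviationEU_eq_EU chosen_pos, deviationEU_auxStrat (h.1 _), (hw _).2,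
    auxPayoff_assignmentWeights hn]

variable [∀ i, Nonempty (Shat i)]

theorem exists_prod_pos_and_BigU_update_pos (h : IsNashEq (BigU Shat Uhat Cl) σ)
    (hPUP : ∀ (i : Player k) (r : ∀ j, Shat j), ∃ t, 0 < Uhat i (Function.update r i t))
    {i j : Player k} (hij : i ≠ j) {x : Strat Shat n m j} (hx : IsGadget x) (hpos : 0 < σ j x) :
    ∃ s, 0 < ∏ l, σ l (s l) ∧ IsGadget (s j) ∧
      ∃ t, 0 < BigU Shat Uhat Cl i (Function.update s i (gadgetStrat Shat i t)) := by
  choose z hz using fun l => (h.1 l).exists_pos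
  have hj : IsGadget (Function.update z j x j) := by rwa [Function.update_self]
  refine ⟨Function.update z j x, prod_pos fun l _ => ?_, hj, exists_BigU_update_pos hPUP hij hj⟩
  exact (Function.forall_update_iff z fun l y => 0 < σ l y).2 ⟨hpos, fun l _ => hz l⟩ l

theorem exists_soleGadgetPayoff_mul_lt (h : IsNashEq (BigU Shat Uhat Cl) σ)
    (hU : ∀ i r, 0 ≤ Uhat i r)
    (hPUP : ∀ (i : Player k) (r : ∀ j, Shat j), ∃ t, 0 < Uhat i (Function.update r i t))
    {p : Fin 2} {j : Player k} (hj : .inl p ≠ j) {x : Strat Shat n m j} (hx : IsGadget x)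
    (hpos : 0 < σ j x) :
    ∃ t, soleGadgetPayoff (auxPart σ (otherP p)) * deltaProb σ <
      deviationEU (BigU Shat Uhat Cl) σ (.inl p) (gadgetStrat Shat _ t) := by
  obtain ⟨s, hs, hsj, t, ht⟩ := h.exists_prod_pos_and_BigU_update_pos hPUP hj hx hpos
  refine ⟨t, ?_⟩
  rw [soleGadgetPayoff, ← expect_prod_noGadgetWeight (h.1 _)]
  refine sum_lt_sum (fun s _ => mul_le_mul_of_nonneg_left
    (prod_noGadgetWeight_le_BigU_update_gadgetStrat hU p t s) (h.prod_nonneg s))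
    ⟨s, mem_univ s, ?_⟩
  rw [prod_noGadgetWeight_eq_zero hj.symm hsj, mul_zero]
  exact mul_pos hs ht

theorem isAuxEquilibrium_auxPart (h : IsNashEq (BigU Shat Uhat Cl) σ) (hU : ∀ i r, 0 ≤ Uhat i r)
    (nonGadget : ∀ j, ∃ x, ¬ IsGadget x ∧ 0 < σ j x) : IsAuxEquilibrium Cl (auxPart σ) := by
  have deltaProb_pos : 0 < deltaProb σ := prod_pos fun q _ => by
    obtain ⟨x, hx, hpos⟩ := nonGadget (.inr q)
    rwa [eq_deltaStrat hx] at hpos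
  refine ⟨fun p c => (h.1 _).1 _, fun p => ?_, fun p c hc c' => ?_, fun p c hc => ?_⟩
  · obtain ⟨x, hx, hpos⟩ := nonGadget (.inl p)
    obtain ⟨c, rfl⟩ := exists_eq_auxStrat hx
    exact ⟨c, hpos⟩
  · have le := h.deviationEU_le_deviationEU hc (auxStrat Shat p c')
    rw [deviationEU_auxStrat (h.1 _), deviationEU_auxStrat (h.1 _)] at le
    exact le_of_mul_le_mul_right le deltaProb_pos
  · let t : Shat (.inl p) := Classical.arbitrary _
    have le := h.deviationEU_le_deviationEU hc (gadgetStrat Shat _ t)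
    rw [deviationEU_auxStrat (h.1 _)] at le
    exact le_of_mul_le_mul_right ((h.soleGadgetPayoff_mul_le hU p t).trans le) deltaProb_pos

-- A chosen literal earns as much as the lone use of a gadget strategy, which in turn would be
-- improved upon by some gadget strategy if another player ever played one.
theorem eq_zero_of_isGadget (h : IsNashEq (BigU Shat Uhat Cl) σ) (hn : 4 ≤ n)
    (hU : ∀ i r, 0 ≤ Uhat i r)
    (hPUP : ∀ (i : Player k) (r : ∀ j, Shat j), ∃ t, 0 < Uhat i (Function.update r i t))
    {γ : Fin n → Bool} {w : Fin 2 → ℝ}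
    (hw : ∀ p, 0 < w p ∧ auxPart σ p = assignmentWeights γ (w p))
    {j : Player k} {x : Strat Shat n m j} (hx : IsGadget x) : σ j x = 0 := by
  obtain ⟨p, hp⟩ : ∃ p : Fin 2, Sum.inl p ≠ j := by
    by_cases hj : Sum.inl 0 = j
    · exact ⟨1, hj ▸ Sum.inl_injective.ne (by decide)⟩
    · exact ⟨0, hj⟩
  by_contra ne
  obtain ⟨t, ht⟩ := h.exists_soleGadgetPayoff_mul_lt hU hPUP hp hx
    (((h.1 j).1 x).lt_of_ne' ne)
  rw [(hw _).2, soleGadgetPayoff_assignmentWeights (by omega), ← h.EU_special_eq hn hw] at ht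
  exact absurd (h.deviationEU_le_EU _ _) ht.not_ge

theorem exists_auxPart_eq_assignmentWeights (h : IsNashEq (BigU Shat Uhat Cl) σ) (hn : 4 ≤ n)
    (hU : ∀ i r, 0 ≤ Uhat i r)
    (hPUP : ∀ (i : Player k) (r : ∀ j, Shat j), ∃ t, 0 < Uhat i (Function.update r i t))
    (nonGadget : ∀ j, ∃ x, ¬ IsGadget x ∧ 0 < σ j x) :
    ∃ γ : Fin n → Bool, (∀ p, auxPart σ p = assignmentWeights γ (1 / n)) ∧
      ∀ j (x : Strat Shat n m j), IsGadget x → σ j x = 0 := by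
  obtain ⟨γ, w, hw⟩ := (h.isAuxEquilibrium_auxPart hU nonGadget).exists_eq_assignmentWeights hn
  have no_gadget : ∀ j (x : Strat Shat n m j), IsGadget x → σ j x = 0 := fun j x =>
    h.eq_zero_of_isGadget hn hU hPUP hw
  refine ⟨γ, fun p => ?_, no_gadget⟩
  have total : n * w p = 1 := by
    rw [← sum_assignmentWeights (m := m) γ, ← (hw p).2]
    exact sum_auxPart_eq_one (h.1 _) (no_gadget _)
  rw [(hw p).2, eq_div_of_mul_eq (left_ne_zero_of_mul_eq_one total) ((mul_comm _ _).trans total)]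

end IsNashEq

section LiftedEquilibria

variable {k n m : ℕ} {Shat : Player k → Type}

theorem liftProfile_gadgetStrat (σh : ∀ i, Shat i → ℝ) (i : Player k) (a : Shat i) :
    liftProfile (n := n) (m := m) Shat σh i (gadgetStrat Shat i a) = σh i a := by
  cases i <;> rfl

theorem liftProfile_of_not_isGadget (σh : ∀ i, Shat i → ℝ) {i : Player k} {x : Strat Shat n m i}
    (hx : ¬ IsGadget x) : liftProfile Shat σh i x = 0 := by
  rcases i with p | q <;> rcases x with a | c
  · exact absurd rfl hx
  · rfl
  · exact absurd rfl hx
  · rfl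

theorem exists_eq_liftProfile {σ : ∀ i, Strat Shat n m i → ℝ}
    (hσ : ∀ i (x : Strat Shat n m i), ¬ IsGadget x → σ i x = 0) :
    ∃ σh, σ = liftProfile Shat σh := by
  refine ⟨fun i a => σ i (gadgetStrat Shat i a), funext fun i => funext fun x => ?_⟩
  by_cases hx : IsGadget x
  · obtain ⟨a, rfl⟩ := hx.exists_eq
    rw [liftProfile_gadgetStrat]
  · rw [liftProfile_of_not_isGadget _ hx, hσ i x hx]

theorem liftProfile_update (σh : ∀ i, Shat i → ℝ) (i : Player k) (τ : Shat i → ℝ) :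
    liftProfile (n := n) (m := m) Shat (Function.update σh i τ) =
      Function.update (liftProfile Shat σh) i (liftProfile Shat (Function.update σh i τ) i) := by
  refine Function.eq_update_iff.2 ⟨rfl, fun j hj => ?_⟩
  cases j <;> simp only [liftProfile, Function.update_of_ne hj] <;> rfl

variable [∀ i, Fintype (Shat i)]

theorem sum_liftProfile (σh : ∀ i, Shat i → ℝ) (i : Player k) :
    ∑ x, liftProfile (n := n) (m := m) Shat σh i x = ∑ a, σh i a := by
  refine (sum_of_injOn (gadgetStrat Shat i) (gadgetStrat_injective i).injOn (by simp) ?_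
    fun a _ => (liftProfile_gadgetStrat σh i a).symm).symm
  refine fun x _ hx => liftProfile_of_not_isGadget σh fun gadget => hx ?_
  obtain ⟨a, rfl⟩ := gadget.exists_eq
  exact ⟨a, by simp, rfl⟩

theorem isDist_liftProfile_iff {σh : ∀ i, Shat i → ℝ} {i : Player k} :
    IsDist (liftProfile (n := n) (m := m) Shat σh i) ↔ IsDist (σh i) := by
  refine and_congr ⟨fun h a => ?_, fun h x => ?_⟩ (by rw [sum_liftProfile])
  · exact liftProfile_gadgetStrat (n := n) (m := m) σh i a ▸ h _
  · by_cases hx : IsGadget x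
    · obtain ⟨a, rfl⟩ := hx.exists_eq
      exact (h a).trans_eq (liftProfile_gadgetStrat σh i a).symm
    · exact (liftProfile_of_not_isGadget σh hx).ge

variable {Uhat : (i : Player k) → (∀ j, Shat j) → ℝ} {Cl : Fin m → Finset (Lit n)}

theorem EU_liftProfile (σh : ∀ i, Shat i → ℝ) (i : Player k) :
    EU (BigU Shat Uhat Cl) (liftProfile Shat σh) i = EU Uhat σh i := by
  refine (sum_of_injOn (fun r j => gadgetStrat Shat j (r j)) ?_ (by simp) ?_ fun r _ => ?_).symm
  · exact fun r _ r' _ h => funext fun j => gadgetStrat_injective j (congrFun h j)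
  · intro s _ hs
    obtain ⟨j, hj⟩ : ∃ j, ¬ IsGadget (s j) := by
      by_contra! all_gadget
      choose r hr using fun j => (all_gadget j).exists_eq
      exact hs ⟨r, by simp, (funext hr).symm⟩
    rw [prod_eq_zero (mem_univ j) (liftProfile_of_not_isGadget σh hj), zero_mul]
  · simp only [liftProfile_gadgetStrat, BigU_gadgetStrat]

theorem IsNashEq.of_liftProfile {σh : ∀ i, Shat i → ℝ}
    (h : IsNashEq (BigU Shat Uhat Cl) (liftProfile Shat σh)) : IsNashEq Uhat σh := by
  refine ⟨fun i => isDist_liftProfile_iff.1 (h.1 i), fun i τ hτ => ?_⟩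
  have lifted_isDist : IsDist (liftProfile (n := n) (m := m) Shat (Function.update σh i τ) i) :=
    isDist_liftProfile_iff.2 (by rwa [Function.update_self])
  have le := h.2 i _ lifted_isDist
  rwa [← liftProfile_update, EU_liftProfile, EU_liftProfile] at le

-- If some player plays only gadget strategies, then everybody else earns `0` from the other
-- strategies, while the positive utility property provides a gadget strategy that earns more.
theorem IsNashEq.exists_not_isGadget_pos [∀ i, Nonempty (Shat i)]
    {σ : ∀ i, Strat Shat n m i → ℝ} (h : IsNashEq (BigU Shat Uhat Cl) σ)
    (hU : ∀ i r, 0 ≤ Uhat i r)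
    (hPUP : ∀ (i : Player k) (r : ∀ j, Shat j), ∃ t, 0 < Uhat i (Function.update r i t))
    (hnotgadget : ¬ ∃ σh : ∀ i, Shat i → ℝ, IsNashEq Uhat σh ∧ σ = liftProfile Shat σh)
    (j : Player k) : ∃ x, ¬ IsGadget x ∧ 0 < σ j x := by
  by_contra! nonpos
  have only_gadget : ∀ x, ¬ IsGadget x → σ j x = 0 := fun x hx =>
    (nonpos x hx).antisymm ((h.1 j).1 x)
  suffices all_gadget : ∀ i (x : Strat Shat n m i), ¬ IsGadget x → σ i x = 0 by
    obtain ⟨σh, rfl⟩ := exists_eq_liftProfile all_gadget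
    exact hnotgadget ⟨σh, h.of_liftProfile, rfl⟩
  intro i x hx
  by_cases hij : i = j
  · subst hij
    exact only_gadget x hx
  by_contra ne
  have zero : deviationEU (BigU Shat Uhat Cl) σ i x = 0 := sum_eq_zero fun s _ => by
    by_cases hs : IsGadget (s j)
    · rw [BigU_eq_zero (i := i) (j := j), mul_zero]
      · rwa [Function.update_self]
      · rwa [Function.update_of_ne (Ne.symm hij)]
    · rw [prod_eq_zero (mem_univ j) (only_gadget _ hs), zero_mul]
  obtain ⟨y, hy⟩ := (h.1 j).exists_pos
  have y_gadget : IsGadget y := by_contra fun hy' => hy.ne' (only_gadget y hy')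
  obtain ⟨s, hs, -, t, ht⟩ := h.exists_prod_pos_and_BigU_update_pos hPUP hij y_gadget hy
  have pos : 0 < deviationEU (BigU Shat Uhat Cl) σ i (gadgetStrat Shat i t) :=
    sum_pos' (fun s _ => mul_nonneg (h.prod_nonneg s) (BigU_nonneg hU _ _))
      ⟨s, mem_univ s, mul_pos hs ht⟩
  exact (pos.trans_le (h.deviationEU_le_deviationEU (((h.1 i).1 x).lt_of_ne' ne) _)).ne' zero

end LiftedEquilibria

theorem reduction_literal_equilibria_general
    {k n m : ℕ} (hn : 4 ≤ n)
    (Shat : Player k → Type) [∀ i, Fintype (Shat i)] [∀ i, Nonempty (Shat i)]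
    (Uhat : (i : Player k) → (∀ j, Shat j) → ℝ)
    (hU : ∀ i s, 0 ≤ Uhat i s)
    (hPUP : ∀ (i : Player k) (s : ∀ j, Shat j), ∃ t, 0 < Uhat i (Function.update s i t))
    (Cl : Fin m → Finset (Lit n))
    (σ : ∀ i, Strat Shat n m i → ℝ) (hNE : IsNashEq (BigU Shat Uhat Cl) σ)
    (hnotgadget : ¬ ∃ σh : ∀ i, Shat i → ℝ,
      IsNashEq Uhat σh ∧ σ = liftProfile Shat σh) :
    ∃ γ : Fin n → Bool,
      (∀ (p : Fin 2) (j : Fin n), σ (Sum.inl p) (litStrat Shat p j (γ j)) = 1 / (n : ℝ)) ∧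
      (∀ (p : Fin 2) (t : Strat Shat n m (Sum.inl p)),
        (∀ j : Fin n, t ≠ litStrat Shat p j (γ j)) → σ (Sum.inl p) t = 0) ∧
      (∀ p : Fin 2, EU (BigU Shat Uhat Cl) σ (Sum.inl p) = 2 / (n : ℝ)) ∧
      (∀ q : Fin k, σ (Sum.inr q) (deltaStrat Shat q) = 1) := by
  obtain ⟨γ, aux_eq, no_gadget⟩ := hNE.exists_auxPart_eq_assignmentWeights hn hU hPUP
    (hNE.exists_not_isGadget_pos hU hPUP hnotgadget)
  have lit : ∀ p j, σ (.inl p) (litStrat Shat p j (γ j)) = 1 / n := fun p j =>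
    (congrFun (aux_eq p) (.inl (j, γ j))).trans (assignmentWeights_chosen γ _ j)
  have delta : ∀ q : Fin k, σ (.inr q) (deltaStrat Shat q) = 1 := fun q =>
    deltaStrat_eq_one (hNE.1 _) (no_gadget (.inr q))
  refine ⟨γ, lit, fun p t ht => ?_, fun p => ?_, delta⟩
  · by_cases gadget : IsGadget t
    · exact no_gadget _ t gadget
    · obtain ⟨c, rfl⟩ := exists_eq_auxStrat gadget
      refine (congrFun (aux_eq p) c).trans (assignmentWeights_eq_zero (fun j hj => ht j ?_) _)
      exact congrArg (auxStrat Shat p) hj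
  · have w_pos : 0 < 1 / (n : ℝ) := one_div_pos.2 (Nat.cast_pos.2 (by omega))
    rw [hNE.EU_special_eq hn (w := fun _ => 1 / n) fun p => ⟨w_pos, aux_eq p⟩, deltaProb,
      prod_congr rfl fun q _ => delta q, prod_const_one]
    ring

/-- For the win-lose game `G = G(Ĝ, φ)` built from an `r`-player win-lose gadget game
`Ĝ` with the positive utility property and a 3SAT formula `φ` with `n ≥ 4` variables:
every Nash equilibrium `σ` of `G` that is not (the lift of) a Nash equilibrium of `Ĝ`
induces an assignment `γ` for `φ` such that each special player plays exactly the `n`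
literals of `γ`, each with probability `1/n`; both special players get expected utility
`2/n`; and every non-special player plays `δ` with probability `1`. -/
theorem reduction_literal_equilibria
    {k n m : ℕ} (hn : 4 ≤ n)
    (Shat : Player k → Type) [∀ i, Fintype (Shat i)] [∀ i, Nonempty (Shat i)]
    (Uhat : (i : Player k) → (∀ j, Shat j) → ℝ)
    (hWL : ∀ i s, Uhat i s = 0 ∨ Uhat i s = 1)
    (hPUP : ∀ (i : Player k) (s : ∀ j, Shat j), ∃ t, 0 < Uhat i (Function.update s i t))
    (Cl : Fin m → Finset (Lit n)) (h3 : ∀ c, (Cl c).card = 3)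
    (σ : ∀ i, Strat Shat n m i → ℝ) (hNE : IsNashEq (BigU Shat Uhat Cl) σ)
    (hnotgadget : ¬ ∃ σh : ∀ i, Shat i → ℝ,
      IsNashEq Uhat σh ∧ σ = liftProfile Shat σh) :
    ∃ γ : Fin n → Bool,
      (∀ (p : Fin 2) (j : Fin n), σ (Sum.inl p) (litStrat Shat p j (γ j)) = 1 / (n : ℝ)) ∧
      (∀ (p : Fin 2) (t : Strat Shat n m (Sum.inl p)),
        (∀ j : Fin n, t ≠ litStrat Shat p j (γ j)) → σ (Sum.inl p) t = 0) ∧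
      (∀ p : Fin 2, EU (BigU Shat Uhat Cl) σ (Sum.inl p) = 2 / (n : ℝ)) ∧
      (∀ q : Fin k, σ (Sum.inr q) (deltaStrat Shat q) = 1) :=
  reduction_literal_equilibria_general hn Shat Uhat
    (fun i s => (hWL i s).elim Eq.ge fun h => h.symm ▸ zero_le_one) hPUP Cl σ hNE hnotgadget
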